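/- If S = {s_1 < ... < s_n} is a convex set, then |D_{{1,2,4}}(S)| ≥ (5/4)n - 2, where D_{{1,2,4}}(S) = {s_x - s_y : x - y ∈ {1,2,4}}. -/

import Mathlib

/-- `DI I n s` is the set `{s x - s y : x - y ∈ I, 1 ≤ y, x ≤ n}`. -/
noncomputable def DI (I : Finset ℕ) (n : ℕ) (s : ℕ → ℝ) : Finset ℝ :=
  ((Finset.Icc 1 n ×ˢ Finset.Icc 1 n).filter
    (fun p => p.2 < p.1 ∧ p.1 - p.2 ∈ I)).image (fun p => s p.1 - s p.2)

/-!
Let `A`, `B`, `C` be the sets of `1`-, `2`- and `4`-step differences `dᵢ`, `bᵢ` and `cᵢ`, each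
listed in increasing order, and let `Q` be the set of those elements of `A \ B` that exceed `b₀`.
The gaps `d₀ < d₁` lie below `b₀ = d₀ + d₁`, so `A \ B` has at least two elements outside `Q`, and
hence `|A ∪ B| ≥ n + |Q|`.

Few elements of `C` are old when `Q` is small. Since `cᵢ = bᵢ + bᵢ₊₂ > b₀`, those in `A \ B` are in
`Q`. If `cᵢ ∈ B`, say `bᵢ + bᵢ₊₂ = dₗ + dₗ₊₁`, and moreover `bᵢ₊₁` is a gap, then `bᵢ₊₁` does not
lie strictly between the consecutive gaps `dₗ` and `dₗ₊₁`, which forces one of them into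
`(bᵢ, bᵢ₊₁)` or `(bᵢ₊₁, bᵢ₊₂)` and hence into `Q`. Thus `|B ∩ C| ≤ |B \ A| + 2|Q|` and
`|A ∪ B ∪ C| ≥ 2n - 5 - 3|Q|`. Eliminating `|Q|` from the two bounds gives
`4|A ∪ B ∪ C| ≥ 5(n - 1)`.
-/

section

open Finset
open scoped fwdDiff

theorem exists_strictMono_eqOn_Iio {α : Type*} [Preorder α] [NoMaxOrder α] {f : ℕ → α} {m : ℕ}
    (hf : StrictMonoOn f (Set.Iio m)) : ∃ g, StrictMono g ∧ Set.EqOn g f (Set.Iio m) := by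
  obtain ⟨h, hh, h0⟩ := Nat.exists_strictMono' (f (m - 1))
  refine ⟨fun i => if i < m then f i else h (i + 1 - m), strictMono_nat_of_lt_succ fun i => ?_,
    fun i hi => if_pos hi⟩
  rcases lt_trichotomy (i + 1) m with him | him | him
  · simpa [him, i.lt_succ_self.trans him] using hf (i.lt_succ_self.trans him) him i.lt_succ_self
  · subst him
    simpa [h0] using hh one_pos
  · simpa [him.not_gt, (Nat.lt_succ_iff.1 him).not_gt] using hh (by omega)

theorem card_filter_exists_mem_Ioo_le {α : Type*} [Preorder α] [DecidableLT α] {b : ℕ → α}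
    (hb : Monotone b) (J : Finset ℕ) (Q : Finset α) :
    #{i ∈ J | ∃ x ∈ Q, x ∈ Set.Ioo (b i) (b (i + 1))} ≤ #Q := by
  refine card_le_card_of_forall_subsingleton (fun i x => x ∈ Set.Ioo (b i) (b (i + 1)))
    (fun i hi => (mem_filter.1 hi).2) fun x _ i hi j hj => ?_
  exact hb.pairwise_disjoint_on_Ioo_succ.eq (Set.not_disjoint_iff.2 ⟨x, hi.2, hj.2⟩)

section AddCommGroup

variable {α : Type*} [AddCommGroup α]

theorem fwdDiff_add_step {M : Type*} [AddCommMonoid M] (h k : M) (f : M → α) (x : M) :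
    Δ_[h + k] f x = Δ_[h] f x + Δ_[k] f (x + h) := by
  simp only [fwdDiff, add_assoc]
  abel

theorem fwdDiff_two_eq_add (s : ℕ → α) (i : ℕ) : Δ_[2] s i = Δ_[1] s i + Δ_[1] s (i + 1) :=
  fwdDiff_add_step 1 1 s i

theorem fwdDiff_four_eq_add (s : ℕ → α) (i : ℕ) : Δ_[4] s i = Δ_[2] s i + Δ_[2] s (i + 2) :=
  fwdDiff_add_step 2 2 s i

theorem exists_strictMono_fwdDiff_eqOn_Iic [Preorder α] [NoMaxOrder α] {s : ℕ → α} {m : ℕ}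
    (hs : StrictMonoOn (Δ_[1] s) (Set.Iio m)) :
    ∃ t, StrictMono (Δ_[1] t) ∧ Set.EqOn t s (Set.Iic m) := by
  obtain ⟨d, hd, hds⟩ := exists_strictMono_eqOn_Iio hs
  refine ⟨fun i => s 0 + ∑ j ∈ range i, d j, ?_, fun i hi => ?_⟩
  · have hdiff : Δ_[1] (fun i => s 0 + ∑ j ∈ range i, d j) = d := by
      ext i
      simp [fwdDiff, sum_range_succ]
    rwa [hdiff]
  · have hsum : ∑ j ∈ range i, d j = ∑ j ∈ range i, (s (j + 1) - s j) :=
      sum_congr rfl fun j hj => hds ((mem_range.1 hj).trans_le hi)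
    simp only [hsum, sum_range_sub, add_sub_cancel]

/-- The set of `k`-step differences `s (i + k) - s i` of the finite sequence
`s 0, …, s (n - 1)`: this is `D_{k}`, with indices starting at `0` instead of `1`. -/
def stepDiffs [DecidableEq α] (k n : ℕ) (s : ℕ → α) : Finset α :=
  (range (n - k)).image (Δ_[k] s)

theorem mem_stepDiffs [DecidableEq α] {k n : ℕ} {s : ℕ → α} {x : α} :
    x ∈ stepDiffs k n s ↔ ∃ i < n - k, Δ_[k] s i = x := by
  simp [stepDiffs]

theorem fwdDiff_mem_stepDiffs [DecidableEq α] {k n i : ℕ} (s : ℕ → α) (hi : i < n - k) :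
    Δ_[k] s i ∈ stepDiffs k n s :=
  mem_stepDiffs.2 ⟨i, hi, rfl⟩

theorem stepDiffs_congr [DecidableEq α] {n : ℕ} {s t : ℕ → α} (k : ℕ)
    (h : Set.EqOn s t (Set.Iio n)) : stepDiffs k n s = stepDiffs k n t := by
  refine image_congr fun i hi => ?_
  have hik : i < n - k := mem_range.1 hi
  simp only [fwdDiff, h (show i + k < n by omega), h (show i < n by omega)]

end AddCommGroup

section OrderedAddCommGroup

variable {α : Type*} [AddCommGroup α] [LinearOrder α] [IsOrderedAddMonoid α] {s : ℕ → α} {n : ℕ}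

theorem strictMono_fwdDiff_of_one (hs : StrictMono (Δ_[1] s)) {k : ℕ} (hk : 1 ≤ k) :
    StrictMono (Δ_[k] s) := by
  induction k, hk using Nat.le_induction with
  | base => exact hs
  | succ k _ ih =>
    intro i j hij
    simp only [fwdDiff_add_step k 1]
    exact add_lt_add (ih hij) (hs (Nat.add_lt_add_right hij k))

theorem card_stepDiffs (hs : StrictMono (Δ_[1] s)) {k : ℕ} (hk : 1 ≤ k) :
    #(stepDiffs k n s) = n - k := by
  rw [stepDiffs, card_image_of_injective _ (strictMono_fwdDiff_of_one hs hk).injective, card_range]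

theorem fwdDiff_one_one_lt_fwdDiff_two (hs : StrictMono (Δ_[1] s)) (h0 : 0 < Δ_[1] s 0) (i : ℕ) :
    Δ_[1] s 1 < Δ_[2] s i :=
  calc Δ_[1] s 1 < Δ_[1] s 0 + Δ_[1] s 1 := lt_add_of_pos_left _ h0
    _ = Δ_[2] s 0 := (fwdDiff_two_eq_add s 0).symm
    _ ≤ Δ_[2] s i := (strictMono_fwdDiff_of_one hs one_le_two).monotone i.zero_le

theorem fwdDiff_two_zero_lt_fwdDiff_four (hs : StrictMono (Δ_[1] s)) (h0 : 0 < Δ_[1] s 0)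
    (i : ℕ) : Δ_[2] s 0 < Δ_[4] s i := by
  have hpos : 0 < Δ_[2] s (i + 2) :=
    (h0.trans (hs one_pos)).trans (fwdDiff_one_one_lt_fwdDiff_two hs h0 _)
  rw [fwdDiff_four_eq_add]
  exact ((strictMono_fwdDiff_of_one hs one_le_two).monotone i.zero_le).trans_lt
    (lt_add_of_pos_right _ hpos)

theorem mem_Ioo_or_mem_Ioo_of_add_succ_eq {d : ℕ → α} (hd : StrictMono d) {u w : α} {l m : ℕ}
    (hu : u < d m) (hw : d m < w) (h : d l + d (l + 1) = u + w) :
    d l ∈ Set.Ioo u (d m) ∨ d (l + 1) ∈ Set.Ioo (d m) w := by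
  rcases lt_or_ge l m with hlm | hml
  · have hle : d (l + 1) ≤ d m := hd.monotone hlm
    refine Or.inl ⟨?_, hd hlm⟩
    by_contra! hlu
    exact (add_lt_add_of_le_of_lt hlu (hle.trans_lt hw)).ne h
  · have hle : d m ≤ d l := hd.monotone hml
    refine Or.inr ⟨hle.trans_lt (hd l.lt_succ_self), ?_⟩
    by_contra! hwl
    exact (add_lt_add_of_lt_of_le (hu.trans_le hle) hwl).ne' h

theorem notMem_stepDiffs_of_mem_Ioo (hs : StrictMono (Δ_[1] s)) {k i : ℕ} (hk : 1 ≤ k) {x : α}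
    (hx : x ∈ Set.Ioo (Δ_[k] s i) (Δ_[k] s (i + 1))) : x ∉ stepDiffs k n s := by
  intro hmem
  obtain ⟨j, -, rfl⟩ := mem_stepDiffs.1 hmem
  have hmono := strictMono_fwdDiff_of_one hs hk
  have hij : i < j := hmono.lt_iff_lt.1 hx.1
  have hji : j < i + 1 := hmono.lt_iff_lt.1 hx.2
  omega

/-- The set `Q` of the counting argument: the `1`-step differences that exceed the least `2`-step
difference without being `2`-step differences themselves. -/
def isolatedGaps (n : ℕ) (s : ℕ → α) : Finset α :=
  {x ∈ stepDiffs 1 n s \ stepDiffs 2 n s | Δ_[2] s 0 < x}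

theorem fwdDiff_one_mem_isolatedGaps (hs : StrictMono (Δ_[1] s)) {i l : ℕ} (hl : l < n - 1)
    (h : Δ_[1] s l ∈ Set.Ioo (Δ_[2] s i) (Δ_[2] s (i + 1))) :
    Δ_[1] s l ∈ isolatedGaps n s :=
  mem_filter.2 ⟨mem_sdiff.2
    ⟨fwdDiff_mem_stepDiffs s hl, notMem_stepDiffs_of_mem_Ioo hs one_le_two h⟩,
    ((strictMono_fwdDiff_of_one hs one_le_two).monotone i.zero_le).trans_lt h.1⟩

theorem card_isolatedGaps_add_two_le (hs : StrictMono (Δ_[1] s)) (h0 : 0 < Δ_[1] s 0)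
    (hn : 3 ≤ n) : #(isolatedGaps n s) + 2 ≤ #(stepDiffs 1 n s \ stepDiffs 2 n s) := by
  have hle (i : ℕ) (hi : i ≤ 1) : Δ_[1] s i ≤ Δ_[1] s 1 := hs.monotone hi
  have hmem (i : ℕ) (hi : i ≤ 1) :
      Δ_[1] s i ∈ {x ∈ stepDiffs 1 n s \ stepDiffs 2 n s | ¬ Δ_[2] s 0 < x} := by
    refine mem_filter.2 ⟨mem_sdiff.2 ⟨fwdDiff_mem_stepDiffs s (by omega), fun hB => ?_⟩,
      ((hle i hi).trans_lt (fwdDiff_one_one_lt_fwdDiff_two hs h0 0)).not_gt⟩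
    obtain ⟨j, -, hj⟩ := mem_stepDiffs.1 hB
    exact ((hle i hi).trans_lt (fwdDiff_one_one_lt_fwdDiff_two hs h0 j)).ne' hj
  have htwo : 2 ≤ #{x ∈ stepDiffs 1 n s \ stepDiffs 2 n s | ¬ Δ_[2] s 0 < x} :=
    (card_pair (hs one_pos).ne).ge.trans <| card_le_card <|
      insert_subset (hmem 0 zero_le_one) (singleton_subset_iff.2 (hmem 1 le_rfl))
  exact (Nat.add_le_add_left htwo _).trans (card_filter_add_card_filter_not _).le

theorem add_card_isolatedGaps_le_card_union (hs : StrictMono (Δ_[1] s)) (h0 : 0 < Δ_[1] s 0)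
    (hn : 3 ≤ n) : n + #(isolatedGaps n s) ≤ #(stepDiffs 1 n s ∪ stepDiffs 2 n s) := by
  have hunion := card_sdiff_add_card (stepDiffs 1 n s) (stepDiffs 2 n s)
  have hiso := card_isolatedGaps_add_two_le hs h0 hn
  rw [card_stepDiffs hs one_le_two] at hunion
  omega

theorem stepDiffs_four_inter_sdiff_subset (hs : StrictMono (Δ_[1] s)) (h0 : 0 < Δ_[1] s 0) :
    stepDiffs 4 n s ∩ (stepDiffs 1 n s \ stepDiffs 2 n s) ⊆ isolatedGaps n s := by
  intro x hx
  obtain ⟨hC, hAB⟩ := mem_inter.1 hx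
  obtain ⟨i, -, rfl⟩ := mem_stepDiffs.1 hC
  exact mem_filter.2 ⟨hAB, fwdDiff_two_zero_lt_fwdDiff_four hs h0 i⟩

theorem exists_mem_isolatedGaps_of_fwdDiff_four_mem (hs : StrictMono (Δ_[1] s)) {i : ℕ}
    (hc : Δ_[4] s i ∈ stepDiffs 2 n s) (hb : Δ_[2] s (i + 1) ∈ stepDiffs 1 n s) :
    (∃ x ∈ isolatedGaps n s, x ∈ Set.Ioo (Δ_[2] s i) (Δ_[2] s (i + 1))) ∨
      ∃ x ∈ isolatedGaps n s, x ∈ Set.Ioo (Δ_[2] s (i + 1)) (Δ_[2] s (i + 2)) := by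
  obtain ⟨l, hl, hlc⟩ := mem_stepDiffs.1 hc
  obtain ⟨m, -, hmb⟩ := mem_stepDiffs.1 hb
  have hb₂ := strictMono_fwdDiff_of_one hs one_le_two
  have hsum : Δ_[1] s l + Δ_[1] s (l + 1) = Δ_[2] s i + Δ_[2] s (i + 2) := by
    rw [← fwdDiff_two_eq_add, hlc, fwdDiff_four_eq_add]
  have hlt₁ : Δ_[2] s i < Δ_[1] s m := hmb ▸ hb₂ i.lt_succ_self
  have hlt₂ : Δ_[1] s m < Δ_[2] s (i + 2) := hmb ▸ hb₂ (i + 1).lt_succ_self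
  rw [← hmb]
  refine (mem_Ioo_or_mem_Ioo_of_add_succ_eq hs hlt₁ hlt₂ hsum).imp (fun h => ?_) fun h => ?_
  · exact ⟨_, fwdDiff_one_mem_isolatedGaps hs (by omega) (hmb ▸ h), h⟩
  · exact ⟨_, fwdDiff_one_mem_isolatedGaps (i := i + 1) hs (by omega) (hmb ▸ h), h⟩

theorem card_stepDiffs_four_inter_two_le (hs : StrictMono (Δ_[1] s)) :
    #(stepDiffs 4 n s ∩ stepDiffs 2 n s) ≤
      #(stepDiffs 2 n s \ stepDiffs 1 n s) + 2 * #(isolatedGaps n s) := by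
  have hb := strictMono_fwdDiff_of_one hs one_le_two
  set I₁ := {i ∈ range (n - 4) | Δ_[2] s (i + 1) ∉ stepDiffs 1 n s}
  set I₂ := {i ∈ range (n - 4) |
    ∃ x ∈ isolatedGaps n s, x ∈ Set.Ioo (Δ_[2] s i) (Δ_[2] s (i + 1))}
  set I₃ := {i ∈ range (n - 4) |
    ∃ x ∈ isolatedGaps n s, x ∈ Set.Ioo (Δ_[2] s (i + 1)) (Δ_[2] s (i + 2))}
  have hI₁ : #I₁ ≤ #(stepDiffs 2 n s \ stepDiffs 1 n s) := by
    refine card_le_card_of_injOn (fun i => Δ_[2] s (i + 1)) (fun i hi => ?_)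
      (hb.injective.comp (add_left_injective 1)).injOn
    obtain ⟨hin, hA⟩ := mem_filter.1 hi
    have hin := mem_range.1 hin
    exact mem_sdiff.2 ⟨fwdDiff_mem_stepDiffs s (by omega), hA⟩
  have hI₂ : #I₂ ≤ #(isolatedGaps n s) := card_filter_exists_mem_Ioo_le hb.monotone _ _
  have hI₃ : #I₃ ≤ #(isolatedGaps n s) :=
    card_filter_exists_mem_Ioo_le (b := fun i => Δ_[2] s (i + 1))
      (fun _ _ hij => hb.monotone (Nat.add_le_add_right hij 1)) _ _
  have hsub : stepDiffs 4 n s ∩ stepDiffs 2 n s ⊆ (I₁ ∪ (I₂ ∪ I₃)).image (Δ_[4] s) := by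
    intro x hx
    obtain ⟨hC, hB⟩ := mem_inter.1 hx
    obtain ⟨i, hi, rfl⟩ := mem_stepDiffs.1 hC
    refine mem_image_of_mem _ ?_
    simp only [I₁, I₂, I₃, mem_union, mem_filter, mem_range, hi, true_and]
    exact or_iff_not_imp_left.2 fun hA =>
      exists_mem_isolatedGaps_of_fwdDiff_four_mem hs hB (not_not.1 hA)
  calc #(stepDiffs 4 n s ∩ stepDiffs 2 n s) ≤ #(I₁ ∪ (I₂ ∪ I₃)) :=
        (card_le_card hsub).trans card_image_le
    _ ≤ #I₁ + (#I₂ + #I₃) :=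
        (card_union_le _ _).trans (Nat.add_le_add_left (card_union_le _ _) _)
    _ ≤ _ := by omega

theorem two_mul_le_card_union_add (hs : StrictMono (Δ_[1] s)) (h0 : 0 < Δ_[1] s 0) :
    2 * n ≤ #(stepDiffs 1 n s ∪ stepDiffs 2 n s ∪ stepDiffs 4 n s) +
      3 * #(isolatedGaps n s) + 5 := by
  set A := stepDiffs 1 n s
  set B := stepDiffs 2 n s
  set C := stepDiffs 4 n s
  have hA : #A = n - 1 := card_stepDiffs hs le_rfl
  have hC : #C = n - 4 := card_stepDiffs hs (by omega)
  have hCB : #(C ∩ B) ≤ #(B \ A) + 2 * #(isolatedGaps n s) := card_stepDiffs_four_inter_two_le hs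
  have hCA : #(C ∩ (A \ B)) ≤ #(isolatedGaps n s) :=
    card_le_card (stepDiffs_four_inter_sdiff_subset hs h0)
  have hCAB : #(C ∩ (A ∪ B)) ≤ #(C ∩ B) + #(C ∩ (A \ B)) := by
    rw [union_comm, ← union_sdiff_self_eq_union, inter_union_distrib_left]
    exact card_union_le _ _
  have hAB : #(A ∪ B) = #(B \ A) + #A := by rw [card_sdiff_add_card, union_comm]
  have hABC : #(A ∪ B ∪ C) = #(C \ (A ∪ B)) + #(A ∪ B) := by rw [card_sdiff_add_card, union_comm]
  have hsplit : #(C ∩ (A ∪ B)) + #(C \ (A ∪ B)) = #C := card_inter_add_card_sdiff _ _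
  omega

theorem five_mul_le_four_mul_card_stepDiffs_union [NoMaxOrder α]
    (hs : StrictMonoOn (Δ_[1] s) (Set.Iio (n - 1))) (h0 : s 0 < s 1) (hn : 3 ≤ n) :
    5 * (n - 1) ≤ 4 * #(stepDiffs 1 n s ∪ stepDiffs 2 n s ∪ stepDiffs 4 n s) := by
  obtain ⟨t, ht, hts⟩ := exists_strictMono_fwdDiff_eqOn_Iic hs
  have ht0 : 0 < Δ_[1] t 0 := by
    simpa [fwdDiff, hts (show 0 ≤ n - 1 by omega), hts (show 1 ≤ n - 1 by omega)] using h0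
  have hst : Set.EqOn s t (Set.Iio n) := fun i hi => (hts (Nat.le_sub_one_of_lt hi)).symm
  simp only [stepDiffs_congr _ hst]
  have hfew := add_card_isolatedGaps_le_card_union ht ht0 hn
  have hmany := two_mul_le_card_union_add (n := n) ht ht0
  have hmono := card_le_card
    (subset_union_left (s₁ := stepDiffs 1 n t ∪ stepDiffs 2 n t) (s₂ := stepDiffs 4 n t))
  omega

end OrderedAddCommGroup

theorem stepDiffs_subset_DI {I : Finset ℕ} {k : ℕ} (hk : k ∈ I) (hk0 : 0 < k) (n : ℕ)
    (s : ℕ → ℝ) : stepDiffs k n (fun i => s (i + 1)) ⊆ DI I n s := by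
  intro x hx
  obtain ⟨i, hi, rfl⟩ := mem_stepDiffs.1 hx
  refine mem_image.2 ⟨(i + k + 1, i + 1), ?_, rfl⟩
  have hsub : i + k + 1 - (i + 1) = k := by omega
  simp only [mem_filter, mem_product, mem_Icc, hsub]
  exact ⟨by omega, by omega, hk⟩

end

/-- If S is a convex set, then |D_{{1,2,4}}(S)| ≥ (5/4)n - 2. -/
theorem card_D124_of_convex (n : ℕ) (s : ℕ → ℝ)
    (hmono : ∀ i, 1 ≤ i → i + 1 ≤ n → s i < s (i + 1))
    (hconv : ∀ i, 1 ≤ i → i + 2 ≤ n → s (i + 1) - s i < s (i + 2) - s (i + 1)) :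
    (5 / 4 : ℝ) * n - 2 ≤ ((DI {1, 2, 4} n s).card : ℝ) := by
  have h₁ := stepDiffs_subset_DI (I := {1, 2, 4}) (k := 1) (by simp) one_pos n s
  have h₂ := stepDiffs_subset_DI (I := {1, 2, 4}) (k := 2) (by simp) two_pos n s
  have h₄ := stepDiffs_subset_DI (I := {1, 2, 4}) (k := 4) (by simp) four_pos n s
  suffices 5 * n ≤ 4 * (DI {1, 2, 4} n s).card + 8 by
    have : (5 : ℝ) * n ≤ 4 * (DI {1, 2, 4} n s).card + 8 := mod_cast this
    linarith
  obtain hn | rfl | hn : n < 2 ∨ n = 2 ∨ 3 ≤ n := by omega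
  · omega
  · have := Finset.card_pos.2 ⟨_, h₁ (fwdDiff_mem_stepDiffs _ (i := 0) one_pos)⟩
    omega
  · have hs : StrictMonoOn (fwdDiff 1 fun i => s (i + 1)) (Set.Iio (n - 1)) :=
      strictMonoOn_of_lt_add_one Set.ordConnected_Iio fun i _ _ hi =>
        hconv (i + 1) (by omega) (by have := Set.mem_Iio.1 hi; omega)
    have hcount :=
      five_mul_le_four_mul_card_stepDiffs_union hs (hmono 1 le_rfl (by omega)) hn
    have hsub := Finset.card_le_card (Finset.union_subset (Finset.union_subset h₁ h₂) h₄)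
    omega
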